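/- Let L > 0 and μ > 0, set λ = (3π)^{2/5} μ^{-4/5} and l = π/√λ, and assume l < L/2. Define ψ₁ : ℝ → ℝ by ψ₁(x) = (1/(λμ))(1 + cos(√λ (x − L/2))) if |x − L/2| ≤ l and ψ₁(x) = 0 otherwise. Then the value of the regularized energy at ψ₁ is (1/μ)∫₀ᴸ |ψ₁(x)| dx + (1/2)∫₀ᴸ (ψ₁'(x))² dx = (5π/2) λ^{-3/2} μ^{-2} = (5π/2)(3π)^{-3/5} μ^{-4/5}; in particular the energy equals a constant times μ^{-4/5}. -/

import Mathlib

open Real MeasureTheory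

/-!
The function `ψ` is a single period of a raised cosine with wave number `√lam` and amplitude
`1 / (lam * μ)`, and `l < L / 2` places its support inside `[0, L]`. On the support the `L¹` penalty
only sees the mean of `1 + cos` over a period and the kinetic energy only that of `sin ^ 2`; the two
contributions are `2π lam ^ (-3/2) μ ^ (-2)` and `(π / 2) lam ^ (-3/2) μ ^ (-2)`. The derivative is
needed only almost everywhere, so the endpoints of the support play no role.
-/

open Filter Set Topology

section DerivIndicator

variable {𝕜 F : Type*} [NontriviallyNormedField 𝕜] [NormedAddCommGroup F] [NormedSpace 𝕜 F]

lemma deriv_indicator_of_notMem_frontier {s : Set 𝕜} {x : 𝕜} (hx : x ∉ frontier s) (f : 𝕜 → F) :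
    deriv (s.indicator f) x = s.indicator (deriv f) x := by
  by_cases hxs : x ∈ s
  · have hs : s ∈ 𝓝 x :=
      mem_interior_iff_mem_nhds.mp (by_contra fun h ↦ hx ⟨subset_closure hxs, h⟩)
    have hf : s.indicator f =ᶠ[𝓝 x] f :=
      eventuallyEq_of_mem hs fun y hy ↦ indicator_of_mem hy f
    rw [hf.deriv_eq, indicator_of_mem hxs]
  · have hx_closure : x ∉ closure s := fun h ↦ hx ⟨h, fun hi ↦ hxs (interior_subset hi)⟩
    have hs : sᶜ ∈ 𝓝 x := mem_interior_iff_mem_nhds.mp (by rwa [interior_compl])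
    have hf : s.indicator f =ᶠ[𝓝 x] fun _ ↦ 0 :=
      eventuallyEq_of_mem hs fun y hy ↦ indicator_of_notMem hy f
    rw [hf.deriv_eq, deriv_const, indicator_of_notMem hxs]

lemma deriv_indicator_ae_eq [MeasurableSpace 𝕜] {ν : Measure 𝕜} {s : Set 𝕜}
    (hs : ν (frontier s) = 0) (f : 𝕜 → F) :
    deriv (s.indicator f) =ᵐ[ν] s.indicator (deriv f) := by
  filter_upwards [measure_eq_zero_iff_ae_notMem.mp hs] with x hx
  exact deriv_indicator_of_notMem_frontier hx f

end DerivIndicator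

section IntervalIntegral

variable {E : Type*} [NormedAddCommGroup E] [NormedSpace ℝ E]

lemma intervalIntegral_indicator_Icc {a b c d : ℝ} (hac : a ≤ c) (hcd : c ≤ d) (hdb : d ≤ b)
    (f : ℝ → E) : ∫ x in a..b, (Icc c d).indicator f x = ∫ x in c..d, f x := by
  rw [intervalIntegral.integral_of_le (hac.trans (hcd.trans hdb)),
    intervalIntegral.integral_of_le hcd, ← integral_Icc_eq_integral_Ioc,
    ← integral_Icc_eq_integral_Ioc, setIntegral_indicator measurableSet_Icc,
    inter_eq_self_of_subset_right (Icc_subset_Icc hac hdb)]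

lemma intervalIntegral_comp_mul_sub_center {k : ℝ} (hk : k ≠ 0) (g : ℝ → E) (m r : ℝ) :
    ∫ x in (m - r / k)..(m + r / k), g (k * (x - m)) = k⁻¹ • ∫ x in (-r)..r, g x := by
  rw [intervalIntegral.integral_comp_sub_right (fun x ↦ g (k * x)),
    intervalIntegral.integral_comp_mul_left g hk]
  congr 2 <;> field_simp <;> ring

end IntervalIntegral

/-- One period of the raised cosine of amplitude `c` and wave number `k`, centred at `m` and
extended by zero outside the interval of radius `π / k`. -/
noncomputable def raisedCosine (c k m : ℝ) : ℝ → ℝ :=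
  (Icc (m - π / k) (m + π / k)).indicator fun x ↦ c * (1 + cos (k * (x - m)))

/-- The `L¹`-regularized free-electron energy on `[a, b]`, that is, the `L¹` penalty with weight
`1 / μ` plus the kinetic energy. The latter uses `deriv`, which is `0` where `ψ` is not
differentiable, so the definition is meant for absolutely continuous `ψ`. -/
noncomputable def regularizedEnergy (μ a b : ℝ) (ψ : ℝ → ℝ) : ℝ :=
  (1 / μ) * (∫ x in a..b, |ψ x|) + (1 / 2) * (∫ x in a..b, (deriv ψ x) ^ 2)

section RaisedCosine

variable {a b c k m : ℝ}

lemma raisedCosine_apply (c k m x : ℝ) :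
    raisedCosine c k m x = if |x - m| ≤ π / k then c * (1 + cos (k * (x - m))) else 0 := by
  simp only [raisedCosine, indicator_apply, mem_Icc_iff_abs_le, abs_sub_comm]

lemma abs_raisedCosine (c k m x : ℝ) : |raisedCosine c k m x| = raisedCosine |c| k m x := by
  have hcos : 0 ≤ 1 + cos (k * (x - m)) := by linarith [neg_one_le_cos (k * (x - m))]
  rw [raisedCosine_apply, raisedCosine_apply]
  split_ifs
  · rw [abs_mul, abs_of_nonneg hcos]
  · exact abs_zero

lemma deriv_raisedCosine_ae_eq (c k m : ℝ) :
    deriv (raisedCosine c k m) =ᵐ[volume]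
      (Icc (m - π / k) (m + π / k)).indicator fun x ↦ -(c * k) * sin (k * (x - m)) := by
  have hderiv : deriv (fun x ↦ c * (1 + cos (k * (x - m)))) =
      fun x ↦ -(c * k) * sin (k * (x - m)) := by
    funext x
    have hphase : HasDerivAt (fun x ↦ k * (x - m)) k x := by
      simpa using ((hasDerivAt_id x).sub_const m).const_mul k
    rw [((hphase.cos.const_add 1).const_mul c).deriv]
    ring
  rw [← hderiv]
  exact deriv_indicator_ae_eq ((convex_Icc _ _).addHaar_frontier volume) _

lemma integral_raisedCosine (hk : 0 < k) (ha : a ≤ m - π / k) (hb : m + π / k ≤ b) :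
    ∫ x in a..b, raisedCosine c k m x = 2 * π * c / k := by
  have hsupp : m - π / k ≤ m + π / k := by linarith [div_pos pi_pos hk]
  calc ∫ x in a..b, raisedCosine c k m x
      = ∫ x in (m - π / k)..(m + π / k), c * (1 + cos (k * (x - m))) :=
        intervalIntegral_indicator_Icc ha hsupp hb _
    _ = k⁻¹ * ∫ x in (-π)..π, c * (1 + cos x) :=
        intervalIntegral_comp_mul_sub_center hk.ne' (fun x ↦ c * (1 + cos x)) m π
    _ = k⁻¹ * (c * (2 * π)) := by
        rw [intervalIntegral.integral_const_mul, intervalIntegral.integral_add (by simp) (by simp)]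
        simp [two_mul]
    _ = 2 * π * c / k := by ring

lemma integral_deriv_raisedCosine_sq (hk : 0 < k) (ha : a ≤ m - π / k) (hb : m + π / k ≤ b) :
    ∫ x in a..b, deriv (raisedCosine c k m) x ^ 2 = π * c ^ 2 * k := by
  have hsupp : m - π / k ≤ m + π / k := by linarith [div_pos pi_pos hk]
  calc ∫ x in a..b, deriv (raisedCosine c k m) x ^ 2
      = ∫ x in a..b, (Icc (m - π / k) (m + π / k)).indicator
          (fun x ↦ (c * k) ^ 2 * sin (k * (x - m)) ^ 2) x := by
        refine intervalIntegral.integral_congr_ae ?_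
        filter_upwards [deriv_raisedCosine_ae_eq c k m] with x hx _
        rw [hx]
        simp only [indicator_apply]
        split_ifs <;> ring
    _ = ∫ x in (m - π / k)..(m + π / k), (c * k) ^ 2 * sin (k * (x - m)) ^ 2 :=
        intervalIntegral_indicator_Icc ha hsupp hb _
    _ = k⁻¹ * ∫ x in (-π)..π, (c * k) ^ 2 * sin x ^ 2 :=
        intervalIntegral_comp_mul_sub_center hk.ne' (fun x ↦ (c * k) ^ 2 * sin x ^ 2) m π
    _ = k⁻¹ * ((c * k) ^ 2 * π) := by
        rw [intervalIntegral.integral_const_mul, integral_sin_sq]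
        simp
    _ = π * c ^ 2 * k := by field_simp

lemma regularizedEnergy_raisedCosine (μ : ℝ) (hk : 0 < k) (ha : a ≤ m - π / k)
    (hb : m + π / k ≤ b) :
    regularizedEnergy μ a b (raisedCosine c k m) = 2 * π * |c| / (μ * k) + π * c ^ 2 * k / 2 := by
  simp only [regularizedEnergy, abs_raisedCosine, integral_raisedCosine hk ha hb,
    integral_deriv_raisedCosine_sq hk ha hb]
  ring

/-- The amplitude `1 / (lam * μ)` with wave number `√lam` is the one for which the raised cosine
solves the Euler–Lagrange equation `-ψ'' + 1 / μ = lam * ψ` on its support. -/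
lemma regularizedEnergy_raisedCosine_sqrt {μ lam : ℝ} (hμ : 0 < μ) (hlam : 0 < lam)
    (ha : a ≤ m - π / √lam) (hb : m + π / √lam ≤ b) :
    regularizedEnergy μ a b (raisedCosine (1 / (lam * μ)) (√lam) m) =
      (5 * π / 2) * lam ^ (-(3 : ℝ) / 2) * μ ^ (-(2 : ℝ)) := by
  have hk : 0 < √lam := sqrt_pos.mpr hlam
  have hlam_eq : lam = √lam ^ 2 := (sq_sqrt hlam.le).symm
  have hpow : lam ^ (-(3 : ℝ) / 2) = (√lam ^ 3)⁻¹ := by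
    rw [sqrt_eq_rpow, ← rpow_natCast, ← rpow_mul hlam.le, ← rpow_neg hlam.le]
    norm_num
  have hamplitude : 1 / (lam * μ) = 1 / (√lam ^ 2 * μ) := by rw [← hlam_eq]
  rw [regularizedEnergy_raisedCosine μ hk ha hb, abs_of_pos (by positivity), hpow, hamplitude,
    rpow_neg hμ.le, rpow_two]
  field_simp
  norm_num

end RaisedCosine

lemma rpow_two_fifths_mul_rpow_neg_four_fifths_rpow {x μ : ℝ} (hx : 0 ≤ x) (hμ : 0 < μ) :
    (x ^ ((2 : ℝ) / 5) * μ ^ (-(4 : ℝ) / 5)) ^ (-(3 : ℝ) / 2) * μ ^ (-(2 : ℝ)) =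
      x ^ (-(3 : ℝ) / 5) * μ ^ (-(4 : ℝ) / 5) := by
  rw [mul_rpow (by positivity) (by positivity), ← rpow_mul hx, ← rpow_mul hμ.le, mul_assoc,
    ← rpow_add hμ]
  norm_num

theorem stmt_4 (L μ lam l : ℝ) (hL : 0 < L) (hμ : 0 < μ)
    (hlam : lam = (3 * Real.pi) ^ ((2 : ℝ) / 5) * μ ^ (-(4 : ℝ) / 5))
    (hl : l = Real.pi / Real.sqrt lam) (hlL : l < L / 2)
    (ψ : ℝ → ℝ)
    (hψ : ∀ x : ℝ, ψ x =
      if |x - L / 2| ≤ l then (1 / (lam * μ)) * (1 + Real.cos (Real.sqrt lam * (x - L / 2)))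
      else 0) :
    (1 / μ) * (∫ x in (0 : ℝ)..L, |ψ x|) + (1 / 2) * (∫ x in (0 : ℝ)..L, (deriv ψ x) ^ 2)
      = (5 * Real.pi / 2) * lam ^ (-(3 : ℝ) / 2) * μ ^ (-(2 : ℝ)) ∧
    (1 / μ) * (∫ x in (0 : ℝ)..L, |ψ x|) + (1 / 2) * (∫ x in (0 : ℝ)..L, (deriv ψ x) ^ 2)
      = (5 * Real.pi / 2) * (3 * Real.pi) ^ (-(3 : ℝ) / 5) * μ ^ (-(4 : ℝ) / 5) := by
  have hlam_pos : 0 < lam := by rw [hlam]; positivity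
  have hψ_eq : ψ = raisedCosine (1 / (lam * μ)) (√lam) (L / 2) := by
    funext x
    rw [hψ, hl, raisedCosine_apply]
  have henergy : regularizedEnergy μ 0 L ψ =
      (5 * π / 2) * lam ^ (-(3 : ℝ) / 2) * μ ^ (-(2 : ℝ)) := by
    rw [hψ_eq]
    exact regularizedEnergy_raisedCosine_sqrt hμ hlam_pos (by linarith) (by linarith)
  refine ⟨henergy, henergy.trans ?_⟩
  rw [hlam, mul_assoc, rpow_two_fifths_mul_rpow_neg_four_fifths_rpow (by positivity) hμ,
    ← mul_assoc]
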